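/- Assume dom f ≠ ∅ and P = ℝⁿ × ℝˢ, let p ∈ [1,∞), let (Ω,𝓕,ℙ) be atomless, let 𝓡 : L^p(Ω,𝓕,ℙ) → ℝ be law-invariant, convex and nondecreasing, let X ⊆ ℝⁿ be a nonempty polyhedron, and let 𝓜 ⊆ 𝓜^p_s be locally uniformly ‖·‖^p-integrating. Suppose μ₀ ∈ 𝓜 and V ⊊ ℝⁿ is an open bounded set such that Φ_V(μ₀) is a CLM set with respect to V. Then: (c) the localized optimal value function φ_V restricted to 𝓜 is continuous at μ₀ with respect to weak convergence; (d) Φ_V restricted to 𝓜 is upper semicontinuous at μ₀ in the sense of Berge, i.e. for every open set 𝓞 ⊆ ℝⁿ with Φ_V(μ₀) ⊆ 𝓞 there exists a weakly open neighborhood 𝓝 of μ₀ such that Φ_V(μ) ⊆ 𝓞 for all μ ∈ 𝓝 ∩ 𝓜; and (e) there exists a weakly open neighborhood 𝓤 of μ₀ such that Φ_V(μ) is a CLM set with respect to V for every μ ∈ 𝓤 ∩ 𝓜. -/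

import Mathlib

open MeasureTheory Matrix Set Topology Filter
open scoped ENNReal NNReal

noncomputable section

/-- Feasible set of the lower level problem: `{ y | A y ≤ T x + z }`. -/
def LowerFeas {n m s : ℕ} (A : Matrix (Fin s) (Fin m) ℝ) (T : Matrix (Fin s) (Fin n) ℝ)
    (x : Fin n → ℝ) (z : Fin s → ℝ) : Set (Fin m → ℝ) :=
  {y | A.mulVec y ≤ T.mulVec x + z}

/-- Lower level optimal solution set `Ψ(x,z) = Argmin { dᵀy | A y ≤ T x + z }`. -/
def Psi {n m s : ℕ} (d : Fin m → ℝ) (A : Matrix (Fin s) (Fin m) ℝ)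
    (T : Matrix (Fin s) (Fin n) ℝ) (x : Fin n → ℝ) (z : Fin s → ℝ) : Set (Fin m → ℝ) :=
  {y | y ∈ LowerFeas A T x z ∧ ∀ y' ∈ LowerFeas A T x z, d ⬝ᵥ y ≤ d ⬝ᵥ y'}

/-- `f(x,z) = cᵀx + inf { qᵀ y | y ∈ Ψ(x,z) }` with values in `ℝ ∪ {±∞}`
(the infimum over the empty set being `+∞`). -/
def fE {n m s : ℕ} (c : Fin n → ℝ) (q d : Fin m → ℝ) (A : Matrix (Fin s) (Fin m) ℝ)
    (T : Matrix (Fin s) (Fin n) ℝ) (x : Fin n → ℝ) (z : Fin s → ℝ) : EReal :=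
  ((c ⬝ᵥ x : ℝ) : EReal) + sInf ((fun y => ((q ⬝ᵥ y : ℝ) : EReal)) '' Psi d A T x z)

/-- `P = { (x,z) | ∃ y, A y ≤ T x + z }`. -/
def Pfeas {n m s : ℕ} (A : Matrix (Fin s) (Fin m) ℝ) (T : Matrix (Fin s) (Fin n) ℝ) :
    Set ((Fin n → ℝ) × (Fin s → ℝ)) :=
  {p | (LowerFeas A T p.1 p.2).Nonempty}

/-- `dom f = { (x,z) | f(x,z) ∈ ℝ }`. -/
def domf {n m s : ℕ} (c : Fin n → ℝ) (q d : Fin m → ℝ) (A : Matrix (Fin s) (Fin m) ℝ)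
    (T : Matrix (Fin s) (Fin n) ℝ) : Set ((Fin n → ℝ) × (Fin s → ℝ)) :=
  {p | fE c q d A T p.1 p.2 ≠ ⊤ ∧ fE c q d A T p.1 p.2 ≠ ⊥}

/-- Topological support of a Borel measure. -/
def msupport {s : ℕ} (μ : Measure (Fin s → ℝ)) : Set (Fin s → ℝ) :=
  {z | ∀ U : Set (Fin s → ℝ), IsOpen U → z ∈ U → μ U ≠ 0}

/-- `P_Z = { x | (x,z) ∈ P for all z ∈ supp μ_Z }`. -/
def PZSet {n m s : ℕ} (A : Matrix (Fin s) (Fin m) ℝ) (T : Matrix (Fin s) (Fin n) ℝ)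
    (μZ : Measure (Fin s → ℝ)) : Set (Fin n → ℝ) :=
  {x | ∀ z ∈ msupport μZ, (x, z) ∈ Pfeas A T}


/-- A polyhedron: solution set of finitely many linear inequalities. -/
def IsPolyhedron {n : ℕ} (X : Set (Fin n → ℝ)) : Prop :=
  ∃ (k : ℕ) (B : Matrix (Fin k) (Fin n) ℝ) (b : Fin k → ℝ), X = {x | B.mulVec x ≤ b}

/-- An atomless probability space: every set of positive measure has a measurable
subset of strictly smaller positive measure. -/
def AtomlessSpace {Ω : Type*} [MeasurableSpace Ω] (μ : Measure Ω) : Prop :=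
  ∀ S : Set Ω, MeasurableSet S → 0 < μ S →
    ∃ B ⊆ S, MeasurableSet B ∧ 0 < μ B ∧ μ B < μ S

/-- A set of Borel probability measures is locally uniformly `‖·‖^p`-integrating if around
every member there is a weakly open neighbourhood on which the `p`-th moment tails vanish
uniformly (the limit as `a → ∞` of the antitone tail suprema being their infimum). -/
def LocUnifIntegrating {s : ℕ} (pr : ℝ) (M : Set (ProbabilityMeasure (Fin s → ℝ))) : Prop :=
  ∀ μ ∈ M, ∀ ε : ℝ, 0 < ε →
    ∃ N : Set (ProbabilityMeasure (Fin s → ℝ)), IsOpen N ∧ μ ∈ N ∧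
      ⨅ a : ℝ, ⨆ ν ∈ M ∩ N,
        ∫⁻ z in {z : Fin s → ℝ | a ≤ ‖z‖}, ENNReal.ofReal (‖z‖ ^ pr)
          ∂(ν : Measure (Fin s → ℝ)) ≤ ENNReal.ofReal ε

/-!
By Hoffman's error bound, the feasible and optimal sets of a linear program are Lipschitz in its
right-hand side; applied to both levels, this makes `f` Lipschitz on all of `ℝⁿ × ℝˢ`, so that
`f(x, ·)` has linear growth uniformly for `x` in a compact set. A convex nondecreasing functional on
the Banach lattice `L^p` is continuous. On an atomless space, weak convergence of laws is realized
by almost sure convergence of random variables, and uniform integrability of the `p`-th moments,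
which linear growth transfers from `z` to `f(x, z)`, improves this to convergence in `L^p`. Hence
`Q` is jointly continuous on `𝓜 × ℝⁿ`, and Berge's maximum theorem on the compact set `X ∩ cl V`
gives the three assertions.
-/

section LinearInequalities

variable {E : Type*} [NormedAddCommGroup E] [NormedSpace ℝ E] {ι : Type*}

/-- The polyhedron `{y | a i y ≤ b i for all i}`. -/
def sublevelPolyhedron (a : ι → E →L[ℝ] ℝ) (b : ι → ℝ) : Set E :=
  {y | ∀ i, a i y ≤ b i}

/-- The unit vectors `u` for which no point of the cone `{w | a i w ≤ 0 for i ∈ I}` is closer to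
`u` than its apex: directions in which the cone is exited perpendicularly. -/
def unitNormals (a : ι → E →L[ℝ] ℝ) (I : Set ι) : Set E :=
  {u | ‖u‖ = 1 ∧ ∀ w, (∀ i ∈ I, a i w ≤ 0) → 1 ≤ ‖u - w‖}

variable {a : ι → E →L[ℝ] ℝ} {b : ι → ℝ}

theorem isClosed_sublevelPolyhedron : IsClosed (sublevelPolyhedron a b) := by
  simp only [sublevelPolyhedron, ofPred_forall]
  exact isClosed_iInter fun i => isClosed_le (a i).continuous continuous_const

theorem isCompact_unitNormals [FiniteDimensional ℝ E] (I : Set ι) :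
    IsCompact (unitNormals a I) := by
  have hclosed : IsClosed {u : E | ∀ w, (∀ i ∈ I, a i w ≤ 0) → 1 ≤ ‖u - w‖} := by
    simp only [ofPred_forall]
    exact isClosed_iInter fun w => isClosed_iInter fun _ =>
      isClosed_le continuous_const (by fun_prop)
  have := FiniteDimensional.proper_real E
  convert (isCompact_sphere (0 : E) 1).inter_right hclosed using 1
  ext u
  simp [unitNormals]

theorem exists_pos_forall_unitNormals_le [FiniteDimensional ℝ E] [Finite ι] (I : Set ι) :
    ∃ r > 0, ∀ u ∈ unitNormals a I, ∃ i ∈ I, r ≤ a i u := by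
  rcases (unitNormals a I).eq_empty_or_nonempty with hempty | hne
  · exact ⟨1, one_pos, by simp [hempty]⟩
  have exists_pos : ∀ u ∈ unitNormals a I, ∃ i ∈ I, 0 < a i u := by
    intro u hu
    by_contra! hle
    exact zero_lt_one.not_ge ((hu.2 u hle).trans_eq (by simp))
  have : Nonempty I := let ⟨u, hu⟩ := hne; let ⟨i, hi, _⟩ := exists_pos u hu; ⟨i, hi⟩
  let _ := Fintype.ofFinite I
  have hcont : Continuous fun u => Finset.univ.sup' Finset.univ_nonempty fun i : I => a i u :=
    Continuous.finset_sup'_apply _ fun i _ => (a i).continuous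
  obtain ⟨u, hu, hmin⟩ := (isCompact_unitNormals I).exists_isMinOn hne hcont.continuousOn
  refine ⟨Finset.univ.sup' Finset.univ_nonempty fun i : I => a i u, ?_, fun v hv => ?_⟩
  · obtain ⟨i, hi, hpos⟩ := exists_pos u hu
    exact hpos.trans_le (Finset.le_sup' (fun i : I => a i u) (Finset.mem_univ ⟨i, hi⟩))
  · obtain ⟨i, -, hi⟩ :=
      Finset.exists_mem_eq_sup' Finset.univ_nonempty fun i : I => a i v
    exact ⟨i, i.2, hi ▸ hmin hv⟩

theorem exists_add_smul_mem_sublevelPolyhedron [Finite ι] {y w : E}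
    (hy : y ∈ sublevelPolyhedron a b) (hw : ∀ i, a i y = b i → a i w ≤ 0) :
    ∃ t ∈ Ioc (0 : ℝ) 1, y + t • w ∈ sublevelPolyhedron a b := by
  have hev : ∀ i, ∀ᶠ t : ℝ in 𝓝[>] 0, a i (y + t • w) ≤ b i := by
    intro i
    rcases (hy i).eq_or_lt with hactive | hslack
    · filter_upwards [self_mem_nhdsWithin] with t ht
      simpa [hactive] using mul_nonpos_of_nonneg_of_nonpos (mem_Ioi.1 ht).le (hw i hactive)
    · have hcont : ContinuousAt (fun t : ℝ => a i (y + t • w)) 0 := by fun_prop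
      exact (hcont.continuousWithinAt.eventually_lt_const (by simpa using hslack)).mono
        fun t => le_of_lt
  obtain ⟨t, hmem, ht⟩ := ((eventually_all.2 hev).and (Ioc_mem_nhdsGT zero_lt_one)).exists
  exact ⟨t, ht, hmem⟩

theorem inv_norm_smul_sub_mem_unitNormals [Finite ι] {x y : E}
    (hy : y ∈ sublevelPolyhedron a b) (hxy : x ≠ y)
    (hnearest : ∀ z ∈ sublevelPolyhedron a b, ‖x - y‖ ≤ ‖x - z‖) :
    ‖x - y‖⁻¹ • (x - y) ∈ unitNormals a {i | a i y = b i} := by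
  have hr : 0 < ‖x - y‖ := norm_pos_iff.2 (sub_ne_zero.2 hxy)
  refine ⟨by simp [norm_smul, hr.ne'], fun w hw => ?_⟩
  obtain ⟨t, ⟨ht0, ht1⟩, hmem⟩ := exists_add_smul_mem_sublevelPolyhedron (w := ‖x - y‖ • w) hy
    fun i hi => by simpa using mul_nonpos_of_nonneg_of_nonpos hr.le (hw i hi)
  have hscale : ‖x - y - ‖x - y‖ • w‖ = ‖x - y‖ * ‖‖x - y‖⁻¹ • (x - y) - w‖ := by
    rw [← norm_norm (x - y), ← norm_smul, norm_norm, smul_sub, smul_inv_smul₀ hr.ne']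
  have hconvex : ‖x - y‖ ≤ (1 - t) * ‖x - y‖ + t * ‖x - y - ‖x - y‖ • w‖ :=
    calc ‖x - y‖ ≤ ‖x - (y + t • ‖x - y‖ • w)‖ := hnearest _ hmem
      _ = ‖(1 - t) • (x - y) + t • (x - y - ‖x - y‖ • w)‖ := by congr 1; module
      _ ≤ (1 - t) * ‖x - y‖ + t * ‖x - y - ‖x - y‖ • w‖ := by
        simpa [norm_smul, abs_of_pos ht0, abs_of_nonneg (sub_nonneg.2 ht1)] using
          norm_add_le ((1 - t) • (x - y)) (t • (x - y - ‖x - y‖ • w))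
  rw [hscale] at hconvex
  have : t * ‖x - y‖ * 1 ≤ t * ‖x - y‖ * ‖‖x - y‖⁻¹ • (x - y) - w‖ := by linarith
  exact le_of_mul_le_mul_left this (by positivity)

-- The constant is the reciprocal of the least slope, over the finitely many possible active index
-- sets, with which the active constraints grow along the normals at a nearest point.
theorem exists_hoffman_bound [FiniteDimensional ℝ E] [Finite ι] (a : ι → E →L[ℝ] ℝ) :
    ∃ L : ℝ≥0, ∀ b, (sublevelPolyhedron a b).Nonempty → ∀ x, ∀ ε : ℝ, 0 ≤ ε →
      (∀ i, a i x ≤ b i + ε) → ∃ y ∈ sublevelPolyhedron a b, dist x y ≤ L * ε := by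
  have := FiniteDimensional.proper_real E
  choose r hr hslope using exists_pos_forall_unitNormals_le (a := a)
  obtain ⟨L, hL⟩ := (finite_range fun I => Real.toNNReal (r I)⁻¹).bddAbove
  refine ⟨L, fun b hne x ε hε hx => ?_⟩
  obtain ⟨y, hy, hdist⟩ := isClosed_sublevelPolyhedron.exists_infDist_eq_dist hne x
  refine ⟨y, hy, ?_⟩
  rcases eq_or_ne x y with rfl | hxy
  · rw [dist_self]; positivity
  have hpos : 0 < ‖x - y‖ := norm_pos_iff.2 (sub_ne_zero.2 hxy)
  have hnearest : ∀ z ∈ sublevelPolyhedron a b, ‖x - y‖ ≤ ‖x - z‖ := fun z hz => by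
    simpa only [← dist_eq_norm, ← hdist] using Metric.infDist_le_dist_of_mem hz
  set I := {i | a i y = b i}
  obtain ⟨i, hi : a i y = b i, hri⟩ := hslope I _
    (inv_norm_smul_sub_mem_unitNormals hy hxy hnearest)
  have hresidual : a i (x - y) ≤ ε := by rw [map_sub, hi]; linarith [hx i]
  rw [map_smul, smul_eq_mul, le_inv_mul_iff₀ hpos] at hri
  have hLI : (r I)⁻¹ ≤ L := Real.toNNReal_le_iff_le_coe.1 (hL ⟨I, rfl⟩)
  calc dist x y = ‖x - y‖ := dist_eq_norm x y
    _ ≤ (r I)⁻¹ * ε := by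
      rw [le_inv_mul_iff₀ (hr I), mul_comm]; exact hri.trans hresidual
    _ ≤ L * ε := by gcongr

theorem isClosed_setOf_sublevelPolyhedron_nonempty [FiniteDimensional ℝ E] [Finite ι]
    (a : ι → E →L[ℝ] ℝ) : IsClosed {b | (sublevelPolyhedron a b).Nonempty} := by
  let _ := Fintype.ofFinite ι
  have := FiniteDimensional.proper_real E
  obtain ⟨L, hL⟩ := exists_hoffman_bound a
  refine IsSeqClosed.isClosed fun b b' hb hlim => ?_
  obtain ⟨R, hR⟩ := (Metric.isBounded_range_of_tendsto b hlim).subset_closedBall (b 0)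
  obtain ⟨y₀, hy₀⟩ := hb 0
  have hnear : ∀ k, ∃ y ∈ sublevelPolyhedron a (b k), dist y₀ y ≤ L * dist (b k) (b 0) := fun k =>
    hL (b k) (hb k) y₀ _ dist_nonneg fun i => (hy₀ i).trans <| sub_le_iff_le_add'.1 <| by
      rw [dist_comm]
      exact (le_abs_self _).trans (dist_le_pi_dist (b 0) (b k) i)
  choose y hy hdist using hnear
  have hbdd : ∀ k, y k ∈ Metric.closedBall y₀ (L * R) := fun k => by
    rw [Metric.mem_closedBall, dist_comm]
    exact (hdist k).trans (by gcongr; exact hR (mem_range_self k))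
  obtain ⟨y', -, σ, hσ, hy'⟩ := (isCompact_closedBall y₀ (L * R)).tendsto_subseq hbdd
  refine ⟨y', fun i => le_of_tendsto_of_tendsto' (((a i).continuous.tendsto y').comp hy')
    ((tendsto_pi_nhds.1 hlim i).comp hσ.tendsto_atTop) fun k => hy (σ k) i⟩

end LinearInequalities

/-- A set-valued map that is Lipschitz for the Hausdorff distance, phrased so that no boundedness
of the values is required. -/
def LipschitzSetValued {H E : Type*} [PseudoMetricSpace H] [PseudoMetricSpace E] (L : ℝ≥0)
    (S : H → Set E) : Prop :=
  ∀ h h', ∀ y ∈ S h, ∃ y' ∈ S h', dist y y' ≤ L * dist h h'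

namespace LipschitzSetValued

variable {H E : Type*} [PseudoMetricSpace H] [PseudoMetricSpace E] {L K : ℝ≥0} {S : H → Set E}
  {f : E → ℝ}

theorem exists_le_add (hS : LipschitzSetValued L S) (hf : LipschitzWith K f) (h h' : H) {y : E}
    (hy : y ∈ S h) : ∃ y' ∈ S h', f y' ≤ f y + (K * L : ℝ≥0) * dist h h' := by
  obtain ⟨y', hy', hdist⟩ := hS h h' y hy
  refine ⟨y', hy', ?_⟩
  calc f y' ≤ f y + K * dist y' y := hf.le_add_mul y' y
    _ ≤ f y + K * (L * dist h h') := by rw [dist_comm]; gcongr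
    _ = f y + (K * L : ℝ≥0) * dist h h' := by push_cast; ring

theorem bddBelow_image (hS : LipschitzSetValued L S) (hf : LipschitzWith K f) {h : H}
    (hbdd : BddBelow (f '' S h)) (h' : H) : BddBelow (f '' S h') := by
  obtain ⟨r, hr⟩ := hbdd
  refine ⟨r - (K * L : ℝ≥0) * dist h' h, forall_mem_image.2 fun y hy => ?_⟩
  obtain ⟨y', hy', hle⟩ := hS.exists_le_add hf h' h hy
  linarith [hr (mem_image_of_mem f hy')]

theorem lipschitzWith_sInf_image (hS : LipschitzSetValued L S) (hf : LipschitzWith K f)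
    (hne : ∀ h, (S h).Nonempty) (hbdd : ∀ h, BddBelow (f '' S h)) :
    LipschitzWith (K * L) fun h => sInf (f '' S h) := by
  refine LipschitzWith.of_le_add_mul _ fun h h' => ?_
  rw [← sub_le_iff_le_add]
  refine le_csInf ((hne h').image f) (forall_mem_image.2 fun y hy => ?_)
  obtain ⟨y', hy', hle⟩ := hS.exists_le_add hf h' h hy
  rw [dist_comm] at hle
  linarith [csInf_le (hbdd h) (mem_image_of_mem f hy')]

end LipschitzSetValued

/-- The set of minimizers of `f` over `S`. -/
def argminOn {α β : Type*} [LE β] (f : α → β) (S : Set α) : Set α :=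
  {x | x ∈ S ∧ ∀ x' ∈ S, f x ≤ f x'}

section LinearPrograms

variable {E : Type*} [NormedAddCommGroup E] [NormedSpace ℝ E]
  {ι : Type*}

theorem argminOn_sublevelPolyhedron {a : ι → E →L[ℝ] ℝ} {d : E →L[ℝ] ℝ} {b : ι → ℝ}
    (hbdd : BddBelow (d '' sublevelPolyhedron a b)) :
    argminOn d (sublevelPolyhedron a b) = sublevelPolyhedron (fun o : Option ι => o.elim d a)
      (fun o => o.elim (sInf (d '' sublevelPolyhedron a b)) b) := by
  ext y
  constructor
  · rintro ⟨hy, hmin⟩ (_ | i)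
    · exact le_csInf ⟨_, mem_image_of_mem d hy⟩ (forall_mem_image.2 hmin)
    · exact hy i
  · intro hy
    exact ⟨fun i => hy (some i), fun y' hy' =>
      (hy none).trans (csInf_le hbdd (mem_image_of_mem d hy'))⟩

variable [FiniteDimensional ℝ E]

theorem argminOn_sublevelPolyhedron_nonempty [Finite ι] {a : ι → E →L[ℝ] ℝ} {d : E →L[ℝ] ℝ}
    {b : ι → ℝ} (hne : (sublevelPolyhedron a b).Nonempty)
    (hbdd : BddBelow (d '' sublevelPolyhedron a b)) :
    (argminOn d (sublevelPolyhedron a b)).Nonempty := by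
  rw [argminOn_sublevelPolyhedron hbdd]
  obtain ⟨v, -, hv, hvmem⟩ := exists_seq_tendsto_sInf (hne.image d) hbdd
  have hlim : Tendsto (fun k (o : Option ι) => o.elim (v k) b) atTop
      (𝓝 fun o => o.elim (sInf (d '' sublevelPolyhedron a b)) b) :=
    tendsto_pi_nhds.2 fun o => o.rec hv fun _ => tendsto_const_nhds
  refine (isClosed_setOf_sublevelPolyhedron_nonempty _).mem_of_tendsto hlim
    (Eventually.of_forall fun k => ?_)
  obtain ⟨y, hy, hyv⟩ := hvmem k
  exact ⟨y, fun o => o.rec hyv.le hy⟩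

variable [Fintype ι]

theorem exists_lipschitzSetValued_sublevelPolyhedron (a : ι → E →L[ℝ] ℝ) :
    ∃ L : ℝ≥0, ∀ {H : Type*} [PseudoMetricSpace H] {g : H → ι → ℝ} {K : ℝ≥0},
      LipschitzWith K g → (∀ h, (sublevelPolyhedron a (g h)).Nonempty) →
        LipschitzSetValued (L * K) fun h => sublevelPolyhedron a (g h) := by
  obtain ⟨L, hL⟩ := exists_hoffman_bound a
  refine ⟨L, fun {H} _ g K hg hne h h' y hy => ?_⟩
  have hres : ∀ i, a i y ≤ g h' i + K * dist h h' := fun i =>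
    calc a i y ≤ g h i := hy i
      _ ≤ g h' i + dist (g h) (g h') :=
        sub_le_iff_le_add'.1 ((le_abs_self _).trans (dist_le_pi_dist (g h) (g h') i))
      _ ≤ g h' i + K * dist h h' := by gcongr; exact hg.dist_le_mul h h'
  obtain ⟨y', hy', hle⟩ := hL (g h') (hne h') y _ (by positivity) hres
  exact ⟨y', hy', by rwa [NNReal.coe_mul, mul_assoc]⟩

/-- The setting is an optimistic bilevel linear program with lower-level objective `d` and
upper-level objective `q`. -/
theorem exists_lipschitzWith_sInf_argminOn_sublevelPolyhedron {a : ι → E →L[ℝ] ℝ}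
    {d q : E →L[ℝ] ℝ} (hfeas : ∀ b, (sublevelPolyhedron a b).Nonempty) {b₀ : ι → ℝ}
    (hsol : (argminOn d (sublevelPolyhedron a b₀)).Nonempty)
    (hbdd : BddBelow (q '' argminOn d (sublevelPolyhedron a b₀))) :
    (∃ K, LipschitzWith K fun b => sInf (q '' argminOn d (sublevelPolyhedron a b))) ∧
      ∀ b, (argminOn d (sublevelPolyhedron a b)).Nonempty ∧
        BddBelow (q '' argminOn d (sublevelPolyhedron a b)) := by
  obtain ⟨L, hL⟩ := exists_lipschitzSetValued_sublevelPolyhedron a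
  have hS := hL LipschitzWith.id hfeas
  have hdbdd : ∀ b, BddBelow (d '' sublevelPolyhedron a b) :=
    let ⟨y, _, hmin⟩ := hsol
    hS.bddBelow_image d.lipschitz ⟨d y, forall_mem_image.2 hmin⟩
  have hne := fun b => argminOn_sublevelPolyhedron_nonempty (hfeas b) (hdbdd b)
  have hval := hS.lipschitzWith_sInf_image d.lipschitz hfeas hdbdd
  obtain ⟨L', hL'⟩ := exists_lipschitzSetValued_sublevelPolyhedron fun o : Option ι => o.elim d a
  have hrhs : LipschitzWith (max (‖d‖₊ * (L * 1)) 1)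
      fun b (o : Option ι) => o.elim (sInf (d '' sublevelPolyhedron a b)) b :=
    LipschitzWith.of_dist_le_mul fun b b' => (dist_pi_le_iff (by positivity)).2 fun o => by
      rcases o with _ | i
      · exact (hval.dist_le_mul b b').trans (by gcongr; exact le_max_left _ _)
      · exact (dist_le_pi_dist b b' i).trans (le_mul_of_one_le_left dist_nonneg (le_max_right _ _))
  have hargmin := hL' hrhs fun b => argminOn_sublevelPolyhedron (hdbdd b) ▸ hne b
  simp only [← argminOn_sublevelPolyhedron (hdbdd _)] at hargmin
  have hqbdd := hargmin.bddBelow_image q.lipschitz hbdd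
  exact ⟨⟨_, hargmin.lipschitzWith_sInf_image q.lipschitz hne hqbdd⟩, fun b => ⟨hne b, hqbdd b⟩⟩

end LinearPrograms

/-- The functional `y ↦ q ⬝ᵥ y`. -/
def dotCLM {m : ℕ} (q : Fin m → ℝ) : (Fin m → ℝ) →L[ℝ] ℝ :=
  (dotProductEquiv ℝ (Fin m) q).toContinuousLinearMap

section BilevelValue

variable {n m s : ℕ} {c : Fin n → ℝ} {q d : Fin m → ℝ} {A : Matrix (Fin s) (Fin m) ℝ}
  {T : Matrix (Fin s) (Fin n) ℝ}

theorem Psi_nonempty_of_fE_ne_top {x : Fin n → ℝ} {z : Fin s → ℝ} (h : fE c q d A T x z ≠ ⊤) :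
    (Psi d A T x z).Nonempty := by
  contrapose! h
  simp [fE, h]

theorem bddBelow_of_fE_ne_bot {x : Fin n → ℝ} {z : Fin s → ℝ} (h : fE c q d A T x z ≠ ⊥) :
    BddBelow (dotCLM q '' Psi d A T x z) := by
  contrapose! h
  have hbot : sInf ((fun y => ((q ⬝ᵥ y : ℝ) : EReal)) '' Psi d A T x z) = ⊥ := by
    refine EReal.eq_bot_iff_forall_lt _ |>.2 fun r => ?_
    obtain ⟨_, ⟨y, hy, rfl⟩, hlt⟩ := not_bddBelow_iff.1 h r
    exact (sInf_le (mem_image_of_mem _ hy)).trans_lt (EReal.coe_lt_coe_iff.2 hlt)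
  rw [fE, hbot, EReal.add_bot]

theorem toReal_fE {x : Fin n → ℝ} {z : Fin s → ℝ} (hne : (Psi d A T x z).Nonempty)
    (hbdd : BddBelow (dotCLM q '' Psi d A T x z)) :
    (fE c q d A T x z).toReal = dotCLM c x + sInf (dotCLM q '' Psi d A T x z) := by
  have hcoe := EReal.coe_strictMono.monotone.map_csInf_of_continuousAt
    continuous_coe_real_ereal.continuousAt (hne.image (dotCLM q)) hbdd
  rw [image_image] at hcoe
  exact (congrArg (fun v => (((c ⬝ᵥ x : ℝ) : EReal) + v).toReal) hcoe).symm

theorem exists_lipschitzWith_toReal_fE (hdom : (domf c q d A T).Nonempty)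
    (hP : Pfeas A T = univ) :
    ∃ K, LipschitzWith K fun w : (Fin n → ℝ) × (Fin s → ℝ) => (fE c q d A T w.1 w.2).toReal := by
  obtain ⟨⟨x₀, z₀⟩, htop, hbot⟩ := hdom
  have hfeas : ∀ b, (sublevelPolyhedron (fun i => dotCLM (A i)) b).Nonempty := fun b => by
    obtain ⟨y, hy⟩ : (0, b) ∈ Pfeas A T := hP ▸ mem_univ _
    exact ⟨y, fun i => (hy i).trans_eq (by simp)⟩
  obtain ⟨⟨K, hK⟩, hfin⟩ := exists_lipschitzWith_sInf_argminOn_sublevelPolyhedron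
    (d := dotCLM d) (b₀ := T *ᵥ x₀ + z₀) hfeas (Psi_nonempty_of_fE_ne_top htop)
    (bddBelow_of_fE_ne_bot (q := q) hbot)
  let rhs : (Fin n → ℝ) × (Fin s → ℝ) →L[ℝ] (Fin s → ℝ) :=
    (toLin' T).toContinuousLinearMap.coprod (.id ℝ _)
  have hlip := ((dotCLM c).lipschitz.comp LipschitzWith.prod_fst).add (hK.comp rhs.lipschitz)
  have hfE : ∀ x z, (fE c q d A T x z).toReal = _ := fun x z =>
    toReal_fE (hfin (T *ᵥ x + z)).1 (hfin (T *ᵥ x + z)).2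
  simp only [hfE]
  exact ⟨_, hlip⟩

end BilevelValue

section Quantile

open ProbabilityTheory

/-- The lower quantile function of a measure on the line. Outside `Ioo 0 1` the infimum may be over
an empty or unbounded set, so only its values on that interval are meaningful. -/
def quantile (ν : Measure ℝ) (u : ℝ) : ℝ :=
  sInf {t | u ≤ cdf ν t}

variable {ν : Measure ℝ} {u t : ℝ}

theorem quantile_le_iff (hu : u ∈ Ioo 0 1) : quantile ν u ≤ t ↔ u ≤ cdf ν t := by
  obtain ⟨lo, hlo⟩ := ((tendsto_cdf_atBot ν).eventually_lt_const hu.1).exists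
  have hbdd : BddBelow {t | u ≤ cdf ν t} :=
    ⟨lo, fun t ht => le_of_not_gt fun hlt => (ht.trans (monotone_cdf ν hlt.le)).not_gt hlo⟩
  obtain ⟨hi, hhi⟩ := ((tendsto_cdf_atTop ν).eventually_const_lt hu.2).exists
  have attained : u ≤ cdf ν (quantile ν u) := by
    refine ge_of_tendsto (((cdf ν).right_continuous _).mono Ioi_subset_Ici_self)
      (eventually_nhdsWithin_of_forall fun r hr => ?_)
    obtain ⟨t, ht, htr⟩ := exists_lt_of_csInf_lt ⟨hi, hhi.le⟩ hr
    exact ht.trans (monotone_cdf ν htr.le)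
  exact ⟨fun h => attained.trans (monotone_cdf ν h), fun h => csInf_le hbdd h⟩

theorem lt_quantile_iff (hu : u ∈ Ioo 0 1) : t < quantile ν u ↔ cdf ν t < u :=
  lt_iff_lt_of_le_iff_le (quantile_le_iff hu)

theorem monotoneOn_quantile (ν : Measure ℝ) : MonotoneOn (quantile ν) (Ioo 0 1) :=
  fun _ hu _ hv huv => (quantile_le_iff hu).2 (huv.trans ((quantile_le_iff hv).1 le_rfl))

theorem aemeasurable_quantile (ν : Measure ℝ) :
    AEMeasurable (quantile ν) (volume.restrict (Ioo 0 1)) :=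
  aemeasurable_restrict_of_monotoneOn measurableSet_Ioo (monotoneOn_quantile ν)

theorem map_quantile (ν : Measure ℝ) [IsProbabilityMeasure ν] :
    Measure.map (quantile ν) (volume.restrict (Ioo 0 1)) = ν := by
  have : IsFiniteMeasure (Measure.map (quantile ν) (volume.restrict (Ioo 0 1))) := inferInstance
  refine Measure.ext_of_Iic _ _ fun t => ?_
  have hpre : quantile ν ⁻¹' Iic t ∩ Ioo 0 1 = Iic (cdf ν t) ∩ Ioo 0 1 := by
    ext u
    simp only [mem_inter_iff, mem_preimage, mem_Iic]
    exact and_congr_left quantile_le_iff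
  calc Measure.map (quantile ν) (volume.restrict (Ioo 0 1)) (Iic t)
      = volume (Iic (cdf ν t) ∩ Ioo 0 1) := by
        rw [Measure.map_apply_of_aemeasurable (aemeasurable_quantile ν) measurableSet_Iic,
          Measure.restrict_apply₀' measurableSet_Ioo.nullMeasurableSet, hpre]
    _ = volume (Iic (cdf ν t) ∩ Ioc 0 1) := measure_congr (ae_eq_rfl.inter Ioo_ae_eq_Ioc)
    _ = ν (Iic t) := by
      rw [inter_comm, Ioc_inter_Iic, min_eq_right (cdf_le_one ν t), Real.volume_Ioc, sub_zero,
        ofReal_cdf]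

theorem cdf_quantile [IsProbabilityMeasure ν] [NullSingletonClass ν] (hu : u ∈ Ioo 0 1) :
    cdf ν (quantile ν u) = u := by
  refine le_antisymm ?_ ((quantile_le_iff hu).1 le_rfl)
  have hnull :
      ENNReal.ofReal (cdf ν (quantile ν u) - Function.leftLim (cdf ν) (quantile ν u)) = 0 := by
    rw [← StieltjesFunction.measure_singleton, measure_cdf, measure_singleton]
  refine (sub_nonpos.1 (ENNReal.ofReal_eq_zero.1 hnull)).trans ?_
  exact le_of_tendsto ((monotone_cdf ν).tendsto_leftLim _)
    (eventually_nhdsWithin_of_forall fun t ht => ((lt_quantile_iff hu).1 ht).le)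

theorem map_cdf (ν : Measure ℝ) [IsProbabilityMeasure ν] [NullSingletonClass ν] :
    Measure.map (cdf ν) ν = volume.restrict (Ioo 0 1) := by
  nth_rw 2 [← map_quantile ν]
  rw [AEMeasurable.map_map_of_aemeasurable (monotone_cdf ν).measurable.aemeasurable
    (aemeasurable_quantile ν)]
  conv_rhs => rw [← Measure.map_id (μ := volume.restrict (Ioo 0 1))]
  exact Measure.map_congr ((ae_restrict_mem measurableSet_Ioo).mono fun u => cdf_quantile)

theorem tendsto_quantile_of_continuousWithinAt {ι : Type*} {l : Filter ι}
    {νs : ι → ProbabilityMeasure ℝ} {ν : ProbabilityMeasure ℝ} (hν : Tendsto νs l (𝓝 ν))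
    (hu : u ∈ Ioo 0 1) (hcont : ContinuousWithinAt (quantile ν) (Ioo 0 1) u) :
    Tendsto (fun k => quantile (νs k) u) l (𝓝 (quantile ν u)) := by
  refine tendsto_order.2 ⟨fun t ht => ?_, fun t ht => ?_⟩
  · have hlt : (ν : Measure ℝ) (Iic t) < ENNReal.ofReal u := by
      rw [← ofReal_cdf]
      exact (ENNReal.ofReal_lt_ofReal_iff hu.1).2 ((lt_quantile_iff hu).1 ht)
    filter_upwards [eventually_lt_of_limsup_lt
      ((ProbabilityMeasure.limsup_measure_closed_le_of_tendsto hν isClosed_Iic).trans_lt hlt)]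
      with k hk
    rw [← ofReal_cdf] at hk
    exact (lt_quantile_iff hu).2 ((ENNReal.ofReal_lt_ofReal_iff hu.1).1 hk)
  · obtain ⟨r', hr', hrt'⟩ := exists_between ht
    obtain ⟨r, hr, hrt⟩ := exists_between hr'
    have hcdf : u < cdf ν r := by
      by_contra! hle
      have := left_nhdsWithin_Ioo_neBot hu.2
      refine hr.not_ge (ge_of_tendsto (hcont.mono (Ioo_subset_Ioo_left hu.1.le))
        (eventually_nhdsWithin_of_forall fun v hv => ?_))
      exact ((lt_quantile_iff ⟨hu.1.trans hv.1, hv.2⟩).2 (hle.trans_lt hv.1)).le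
    have hlt : ENNReal.ofReal u < (ν : Measure ℝ) (Iio r') :=
      calc ENNReal.ofReal u < ENNReal.ofReal (cdf ν r) :=
            (ENNReal.ofReal_lt_ofReal_iff (hu.1.trans hcdf)).2 hcdf
        _ = (ν : Measure ℝ) (Iic r) := ofReal_cdf _ r
        _ ≤ (ν : Measure ℝ) (Iio r') := measure_mono (Iic_subset_Iio.2 hrt)
    filter_upwards [eventually_lt_of_lt_liminf
      (hlt.trans_le (ProbabilityMeasure.le_liminf_measure_open_of_tendsto hν isOpen_Iio))]
      with k hk
    have hk' := hk.trans_le (measure_mono Iio_subset_Iic_self)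
    rw [← ofReal_cdf] at hk'
    exact ((quantile_le_iff hu).2
      ((ENNReal.ofReal_lt_ofReal_iff_of_nonneg hu.1.le).1 hk').le).trans_lt hrt'

theorem ae_tendsto_quantile {ι : Type*} {l : Filter ι} {νs : ι → ProbabilityMeasure ℝ}
    {ν : ProbabilityMeasure ℝ} (hν : Tendsto νs l (𝓝 ν)) :
    ∀ᵐ u ∂volume.restrict (Ioo 0 1),
      Tendsto (fun k => quantile (νs k) u) l (𝓝 (quantile ν u)) := by
  rw [ae_restrict_iff' measurableSet_Ioo]
  filter_upwards [(monotoneOn_quantile ν).countable_not_continuousWithinAt.ae_notMem volume]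
    with u hu hmem
  exact tendsto_quantile_of_continuousWithinAt hν hmem (by_contra fun h => hu ⟨hmem, h⟩)

end Quantile

namespace AtomlessSpace

variable {Ω : Type*} [MeasurableSpace Ω] {μ : Measure Ω} [IsFiniteMeasure μ]

theorem exists_subset_measure_le (hμ : AtomlessSpace μ) {S : Set Ω} (hS : MeasurableSet S)
    (hpos : 0 < μ S) {ε : ℝ≥0∞} (hε : 0 < ε) :
    ∃ B ⊆ S, MeasurableSet B ∧ 0 < μ B ∧ μ B ≤ ε := by
  set 𝒞 := {B | B ⊆ S ∧ MeasurableSet B ∧ 0 < μ B}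
  have hinf : sInf (μ '' 𝒞) = 0 := by
    by_contra hne
    have hS𝒞 : S ∈ 𝒞 := ⟨Subset.rfl, hS, hpos⟩
    have hfin : sInf (μ '' 𝒞) ≠ ⊤ :=
      ((sInf_le (mem_image_of_mem μ hS𝒞)).trans_lt (measure_lt_top μ S)).ne
    obtain ⟨_, ⟨B, ⟨hBS, hB, hBpos⟩, rfl⟩, hlt⟩ :=
      sInf_lt_iff.1 (ENNReal.lt_add_right hfin hne)
    obtain ⟨C, hCB, hC, hCpos, hCB_lt⟩ := hμ B hB hBpos
    have hdiff : 0 < μ (B \ C) := by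
      rw [measure_sdiff hCB hC.nullMeasurableSet (measure_ne_top μ C)]
      exact tsub_pos_of_lt hCB_lt
    refine hlt.not_ge ?_
    calc sInf (μ '' 𝒞) + sInf (μ '' 𝒞) ≤ μ C + μ (B \ C) :=
          add_le_add (sInf_le (mem_image_of_mem μ ⟨hCB.trans hBS, hC, hCpos⟩))
            (sInf_le (mem_image_of_mem μ ⟨sdiff_subset.trans hBS, hB.diff hC, hdiff⟩))
      _ = μ B := by
        rw [measure_sdiff hCB hC.nullMeasurableSet (measure_ne_top μ C),
          add_tsub_cancel_of_le (measure_mono hCB)]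
  obtain ⟨_, ⟨B, ⟨hBS, hB, hBpos⟩, rfl⟩, hlt⟩ := sInf_lt_iff.1 (hinf.trans_lt hε)
  exact ⟨B, hBS, hB, hBpos, hlt.le⟩

theorem exists_ae_cover_measure_le (hμ : AtomlessSpace μ) {ε : ℝ≥0∞} (hε : 0 < ε) :
    ∃ E : ℕ → Set Ω, (∀ k, MeasurableSet (E k) ∧ μ (E k) ≤ ε) ∧ ∀ᵐ ω ∂μ, ∃ k, ω ∈ E k := by
  let 𝒞 := {E : ℕ → Set Ω | ∀ k, MeasurableSet (E k) ∧ μ (E k) ≤ ε}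
  have hne : (fun _ => ∅) ∈ 𝒞 := fun _ => ⟨.empty, by simp⟩
  obtain ⟨v, -, hv, hvmem⟩ := exists_seq_tendsto_sSup
    ((show 𝒞.Nonempty from ⟨_, hne⟩).image fun E => μ (⋃ k, E k)) (OrderTop.bddAbove _)
  choose F hF hFv using hvmem
  let E : ℕ → Set Ω := fun k => F k.unpair.1 k.unpair.2
  have hE : E ∈ 𝒞 := fun k => hF _ _
  have hmax : ∀ E' ∈ 𝒞, μ (⋃ k, E' k) ≤ μ (⋃ k, E k) := fun E' hE' =>
    (le_sSup (mem_image_of_mem (fun E => μ (⋃ k, E k)) hE')).trans <| le_of_tendsto' hv fun i => by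
      rw [← hFv, iUnion_unpair F]
      exact measure_mono (subset_iUnion (fun i => ⋃ j, F i j) i)
  refine ⟨E, hE, ?_⟩
  have hmeas : MeasurableSet (⋃ k, E k) := .iUnion fun k => (hE k).1
  by_contra hcover
  have huncovered : 0 < μ (⋃ k, E k)ᶜ := by
    refine pos_iff_ne_zero.2 fun hnull => hcover ?_
    filter_upwards [mem_ae_iff.2 hnull] with ω hω using mem_iUnion.1 hω
  obtain ⟨B, hBsub, hB, hBpos, hBε⟩ := hμ.exists_subset_measure_le hmeas.compl huncovered hε
  let extended : ℕ → Set Ω := fun k => Nat.casesOn k B E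
  have hextended : extended ∈ 𝒞 := fun k => by cases k; exacts [⟨hB, hBε⟩, hE _]
  refine (hmax extended hextended).not_gt ?_
  calc μ (⋃ k, E k) < μ (⋃ k, E k) + μ B :=
        ENNReal.lt_add_right (measure_ne_top μ _) hBpos.ne'
    _ = μ (B ∪ ⋃ k, E k) := by
      rw [measure_union (disjoint_compl_left.mono_left hBsub) hmeas, add_comm]
    _ = μ (⋃ k, extended k) := congrArg μ (union_iUnion_nat_succ extended)

/-- Recording which members of covers by ever smaller sets contain a point yields a random variable
whose level sets lie in arbitrarily small sets. -/
theorem exists_measurable_nullSingletonClass_map (hμ : AtomlessSpace μ) :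
    ∃ U : Ω → ℝ, Measurable U ∧ NullSingletonClass (μ.map U) := by
  choose E hE hcover using fun n : ℕ => hμ.exists_ae_cover_measure_le
    (ε := (n : ℝ≥0∞)⁻¹) (by simp)
  let code : Ω → ℕ × ℕ → Prop := fun ω i => ω ∈ E i.1 i.2
  have hcode : Measurable code := measurable_pi_lambda _ fun i => (hE i.1 i.2).1.mem
  refine ⟨embeddingReal _ ∘ code, (measurable_embeddingReal _).comp hcode, ⟨fun t => ?_⟩⟩
  rw [Measure.map_apply ((measurable_embeddingReal _).comp hcode) (measurableSet_singleton t)]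
  set S := embeddingReal _ ∘ code ⁻¹' {t}
  have hsmall : ∀ n : ℕ, μ S ≤ (n : ℝ≥0∞)⁻¹ := by
    intro n
    by_cases hmeet : ∃ ω ∈ S, ∃ k, ω ∈ E n k
    · obtain ⟨ω, hω, k, hk⟩ := hmeet
      refine (measure_mono fun ω' hω' => ?_).trans (hE n k).2
      have hsame : code ω' = code ω :=
        (measurableEmbedding_embeddingReal _).injective (hω'.trans hω.symm)
      exact (congrFun hsame (n, k)).mpr hk
    · have : μ S = 0 := measure_mono_null (fun ω hω hk => hmeet ⟨ω, hω, hk⟩) (ae_iff.1 (hcover n))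
      simp [this]
  exact le_zero_iff.1 (ge_of_tendsto' ENNReal.tendsto_inv_nat_nhds_zero hsmall)

theorem exists_measurable_map_eq_uniform [IsProbabilityMeasure μ] (hμ : AtomlessSpace μ) :
    ∃ U : Ω → ℝ, Measurable U ∧ μ.map U = volume.restrict (Ioo 0 1) := by
  obtain ⟨U, hU, hnull⟩ := hμ.exists_measurable_nullSingletonClass_map
  have := Measure.isProbabilityMeasure_map (μ := μ) hU.aemeasurable
  have hcdf := (ProbabilityTheory.monotone_cdf (μ.map U)).measurable
  exact ⟨_, hcdf.comp hU, by rw [← Measure.map_map hcdf hU, map_cdf]⟩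

end AtomlessSpace

section ConvexMonotone

variable {E : Type*} [NormedAddCommGroup E] [CompleteSpace E] [Lattice E] [HasSolidNorm E]
  [IsOrderedAddMonoid E] {R : E → ℝ}

/-- If `R` were unbounded near `0`, it would take arbitrarily large values along a sequence
dominated by the sum of a convergent series. -/
theorem isBoundedUnder_nhds_zero_of_monotone (hR : Monotone R) :
    (𝓝 (0 : E)).IsBoundedUnder (· ≤ ·) R := by
  by_contra hunbdd
  have hlarge (k : ℕ) : ∃ y : E, ‖y‖ < (1 / 2 : ℝ) ^ k ∧ k < R y := by
    by_contra! hle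
    refine hunbdd (isBoundedUnder_of_eventually_le (a := (k : ℝ)) ?_)
    filter_upwards [Metric.ball_mem_nhds (0 : E) (pow_pos one_half_pos k)] with y hy
    exact hle y (mem_ball_zero_iff.1 hy)
  choose y hy hRy using hlarge
  have hsum : Summable fun k => |y k| :=
    .of_norm_bounded summable_geometric_two fun k => (norm_abs_eq_norm (y k)).trans_le (hy k).le
  obtain ⟨k, hk⟩ := exists_nat_gt (R (∑' k, |y k|))
  have hdom : y k ≤ ∑' k, |y k| :=
    (le_abs_self _).trans (hsum.le_tsum k fun _ _ => abs_nonneg _)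
  exact ((hk.trans (hRy k)).trans_le (hR hdom)).false

theorem continuous_of_convexOn_of_monotone [NormedSpace ℝ E] (hconv : ConvexOn ℝ univ R)
    (hR : Monotone R) : Continuous R := by
  have hbdd : ∃ y ∈ univ, (𝓝 y).IsBoundedUnder (· ≤ ·) R :=
    ⟨0, mem_univ 0, isBoundedUnder_nhds_zero_of_monotone hR⟩
  exact continuousOn_univ.1 (((hconv.continuousOn_tfae isOpen_univ univ_nonempty).out 3 1).1 hbdd)

end ConvexMonotone

section UnifIntegrating

variable {G H : Type*} [NormedAddCommGroup G] [MeasurableSpace G] [NormedAddCommGroup H]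
  [MeasurableSpace H] {p : ℝ≥0∞}

/-- The `L^p` seminorm of the part of a measure outside the open ball of radius `C`, that is, the
`p`-th root of the tail of its `p`-th moment. -/
def lpTail (p : ℝ≥0∞) (μ : Measure G) (C : ℝ≥0) : ℝ≥0∞ :=
  eLpNorm ({z | C ≤ ‖z‖₊}.indicator id) p μ

/-- Uniform `‖·‖^p`-integrability of a set of probability measures. -/
def UnifIntegrating (p : ℝ≥0∞) (S : Set (ProbabilityMeasure G)) : Prop :=
  ∀ ε : ℝ, 0 < ε → ∃ C : ℝ≥0, ∀ ν ∈ S, lpTail p (ν : Measure G) C ≤ ENNReal.ofReal ε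

theorem antitone_lpTail (p : ℝ≥0∞) (μ : Measure G) : Antitone (lpTail p μ) := fun _ _ h =>
  eLpNorm_mono_enorm fun _ => enorm_indicator_le_of_subset (fun _ hz => h.trans hz) _ _

theorem lpTail_eq_lintegral [OpensMeasurableSpace G] (hp : p ≠ 0) (hp' : p ≠ ⊤)
    (μ : Measure G) (C : ℝ≥0) :
    lpTail p μ C
      = (∫⁻ z in {z | (C : ℝ) ≤ ‖z‖}, ENNReal.ofReal (‖z‖ ^ p.toReal) ∂μ) ^ p.toReal⁻¹ := by
  rw [lpTail, eLpNorm_indicator_eq_eLpNorm_restrict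
      (measurableSet_le measurable_const measurable_nnnorm),
    eLpNorm_eq_lintegral_rpow_enorm_toReal hp hp', one_div]
  simp only [id, ← ofReal_norm, ENNReal.ofReal_rpow_of_nonneg (norm_nonneg _)
    ENNReal.toReal_nonneg]
  rfl

namespace UnifIntegrating

theorem memLp_id [BorelSpace G] [SecondCountableTopology G] {S : Set (ProbabilityMeasure G)}
    (hS : UnifIntegrating p S) {ν : ProbabilityMeasure G} (hν : ν ∈ S) :
    MemLp id p (ν : Measure G) := by
  obtain ⟨C, hC⟩ := hS 1 one_pos
  have hmeas : MeasurableSet {z : G | C ≤ ‖z‖₊} :=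
    measurableSet_le measurable_const measurable_nnnorm
  have hlarge : MemLp ({z : G | C ≤ ‖z‖₊}.indicator id) p (ν : Measure G) :=
    ⟨(measurable_id.indicator hmeas).aestronglyMeasurable,
      (hC ν hν).trans_lt ENNReal.ofReal_lt_top⟩
  have hsmall : MemLp ({z : G | C ≤ ‖z‖₊}ᶜ.indicator id) p (ν : Measure G) := by
    refine .of_bound (measurable_id.indicator hmeas.compl).aestronglyMeasurable C (.of_forall ?_)
    intro z
    rw [norm_indicator_eq_indicator_norm]
    exact indicator_le' (fun w hw => (not_le.1 hw).le) (fun _ _ => C.2) z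
  simpa only [indicator_self_add_compl] using hlarge.add hsmall

theorem map_of_linear_growth [BorelSpace H] [SecondCountableTopology H]
    {S : Set (ProbabilityMeasure G)} (hS : UnifIntegrating p S) (B : ℝ≥0) :
    UnifIntegrating p {ρ : ProbabilityMeasure H | ∃ ν ∈ S, ∃ F : G → H, Measurable F ∧
      (∀ z, ‖F z‖₊ ≤ B * (1 + ‖z‖₊)) ∧ (ρ : Measure H) = (ν : Measure G).map F} := by
  intro ε hε
  obtain ⟨C, hC⟩ := hS (ε / (2 * (B + 1))) (by positivity)
  let D := max C 1
  refine ⟨(B + 1) * (1 + D), ?_⟩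
  rintro ρ ⟨ν, hν, F, hF, hgrowth, hρ⟩
  have htail (z : G) : ‖({w | (B + 1) * (1 + D) ≤ ‖w‖₊}.indicator id (F z) : H)‖₊
      ≤ 2 * (B + 1) * ‖({w | D ≤ ‖w‖₊}.indicator id z : G)‖₊ := by
    by_cases hFz : (B + 1) * (1 + D) ≤ ‖F z‖₊
    · have hgrowth' : ‖F z‖₊ ≤ (B + 1) * (1 + ‖z‖₊) :=
        (hgrowth z).trans (by gcongr; exact le_self_add)
      have hDz : D ≤ ‖z‖₊ :=
        le_of_add_le_add_left (le_of_mul_le_mul_left (hFz.trans hgrowth') (by positivity))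
      rw [indicator_of_mem (by exact hFz), indicator_of_mem (by exact hDz), mul_comm 2, mul_assoc,
        two_mul]
      refine hgrowth'.trans (mul_le_mul_right (add_le_add_left ?_ _) _)
      exact (le_max_right C 1).trans hDz
    · rw [indicator_of_notMem (by exact hFz), nnnorm_zero]
      exact zero_le
  have hmeas : Measurable ({w : H | (B + 1) * (1 + D) ≤ ‖w‖₊}.indicator id) :=
    measurable_id.indicator (measurableSet_le measurable_const measurable_nnnorm)
  calc lpTail p (ρ : Measure H) ((B + 1) * (1 + D))
      = eLpNorm ({w : H | (B + 1) * (1 + D) ≤ ‖w‖₊}.indicator id ∘ F) p ν := by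
        rw [lpTail, hρ, eLpNorm_map_measure hmeas.aestronglyMeasurable hF.aemeasurable]
    _ ≤ (2 * (B + 1)) • lpTail p (ν : Measure G) D :=
      eLpNorm_le_nnreal_smul_eLpNorm_of_ae_le_mul (.of_forall htail) p
    _ ≤ (2 * (B + 1)) • ENNReal.ofReal (ε / (2 * (B + 1))) := by
      gcongr
      exact (antitone_lpTail p _ (le_max_left C 1)).trans (hC ν hν)
    _ = ENNReal.ofReal ε := by
      rw [ENNReal.smul_def, smul_eq_mul, ← ENNReal.ofReal_coe_nnreal,
        ← ENNReal.ofReal_mul NNReal.zero_le_coe]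
      push_cast
      rw [mul_div_cancel₀ ε (by positivity)]

end UnifIntegrating

theorem LocUnifIntegrating.unifIntegrating_of_isCompact {s : ℕ} (hp : p ≠ 0) (hp' : p ≠ ⊤)
    {M K : Set (ProbabilityMeasure (Fin s → ℝ))} (hM : LocUnifIntegrating p.toReal M)
    (hK : IsCompact K) (hKM : K ⊆ M) : UnifIntegrating p K := by
  intro ε hε
  refine hK.induction_on (p := fun S => ∃ C : ℝ≥0, ∀ ν ∈ S,
    lpTail p (ν : Measure (Fin s → ℝ)) C ≤ ENNReal.ofReal ε)
    ⟨0, by simp⟩ (fun _ _ hst ⟨C, hC⟩ => ⟨C, fun ν hν => hC ν (hst hν)⟩) ?_ fun μ hμ => ?_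
  · rintro S S' ⟨C, hC⟩ ⟨C', hC'⟩
    refine ⟨max C C', fun ν hν => hν.elim (fun h => ?_) fun h => ?_⟩
    · exact (antitone_lpTail p _ (le_max_left C C')).trans (hC ν h)
    · exact (antitone_lpTail p _ (le_max_right C C')).trans (hC' ν h)
  · have hr : 0 < p.toReal := ENNReal.toReal_pos hp hp'
    obtain ⟨N, hN, hμN, htail⟩ := hM μ (hKM hμ) (ε ^ p.toReal / 2) (by positivity)
    obtain ⟨a, ha⟩ := iInf_lt_iff.1 (htail.trans_lt
      ((ENNReal.ofReal_lt_ofReal_iff (by positivity)).2 (half_lt_self (Real.rpow_pos_of_pos hε _))))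
    refine ⟨N ∩ K, inter_mem (mem_nhdsWithin_of_mem_nhds (hN.mem_nhds hμN)) self_mem_nhdsWithin,
      a.toNNReal, fun ν hν => ?_⟩
    rw [lpTail_eq_lintegral hp hp', ENNReal.rpow_inv_le_iff hr,
      ENNReal.ofReal_rpow_of_pos hε]
    calc _ ≤ ∫⁻ z in {z : Fin s → ℝ | a ≤ ‖z‖}, ENNReal.ofReal (‖z‖ ^ p.toReal) ∂ν :=
          lintegral_mono_set fun z hz => (Real.le_coe_toNNReal a).trans hz
      _ ≤ ⨆ ν ∈ M ∩ N, ∫⁻ z in {z : Fin s → ℝ | a ≤ ‖z‖}, ENNReal.ofReal (‖z‖ ^ p.toReal)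
            ∂(ν : Measure (Fin s → ℝ)) := le_iSup₂_of_le ν ⟨hKM hν.2, hν.1⟩ le_rfl
      _ ≤ ENNReal.ofReal (ε ^ p.toReal) := ha.le

end UnifIntegrating

open ProbabilityTheory in
/-- Quantile functions turn weak convergence into almost sure convergence, which uniform
integrability upgrades to convergence in `L^p`. -/
theorem AtomlessSpace.exists_tendsto_Lp {Ω : Type*} [MeasurableSpace Ω] {P : Measure Ω}
    [IsProbabilityMeasure P] (hP : AtomlessSpace P) {p : ℝ≥0∞} [hp : Fact (1 ≤ p)] (hp' : p ≠ ⊤)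
    {S : Set (ProbabilityMeasure ℝ)} (hS : UnifIntegrating p S) {νs : ℕ → ProbabilityMeasure ℝ}
    {ν : ProbabilityMeasure ℝ} (hνs : ∀ k, νs k ∈ S) (hν : ν ∈ S)
    (hlim : Tendsto νs atTop (𝓝 ν)) :
    ∃ (Ys : ℕ → Lp ℝ p P) (Y : Lp ℝ p P), Tendsto Ys atTop (𝓝 Y) ∧
      (∀ k, P.map (Ys k) = νs k) ∧ P.map Y = ν := by
  obtain ⟨U, hU, hUlaw⟩ := hP.exists_measurable_map_eq_uniform
  have hquantile (ρ : ProbabilityMeasure ℝ) : AEMeasurable (quantile ρ) (P.map U) :=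
    hUlaw ▸ aemeasurable_quantile ρ
  let X (ρ : ProbabilityMeasure ℝ) : Ω → ℝ := quantile ρ ∘ U
  have hX (ρ : ProbabilityMeasure ℝ) : AEMeasurable (X ρ) P :=
    (hquantile ρ).comp_measurable hU
  have hXmap (ρ : ProbabilityMeasure ℝ) : P.map (X ρ) = ρ := by
    rw [← AEMeasurable.map_map_of_aemeasurable (hquantile ρ) hU.aemeasurable, hUlaw, map_quantile]
  have hXlaw (ρ : ProbabilityMeasure ℝ) : IdentDistrib (X ρ) id P ρ :=
    ⟨hX ρ, aemeasurable_id, (hXmap ρ).trans Measure.map_id.symm⟩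
  have hXmem {ρ : ProbabilityMeasure ℝ} (hρ : ρ ∈ S) : MemLp (X ρ) p P :=
    (hXlaw ρ).memLp_iff.2 (hS.memLp_id hρ)
  have hae : ∀ᵐ ω ∂P, Tendsto (fun k => X (νs k) ω) atTop (𝓝 (X ν ω)) :=
    ae_of_ae_map hU.aemeasurable (hUlaw ▸ ae_tendsto_quantile hlim)
  have hUI : UnifIntegrable (fun k => X (νs k)) p P := by
    refine unifIntegrable_of hp.out hp' (fun k => (hX _).aestronglyMeasurable) fun ε hε => ?_
    obtain ⟨C, hC⟩ := hS ε hε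
    have hmeas : Measurable ({r : ℝ | C ≤ ‖r‖₊}.indicator id) :=
      measurable_id.indicator (measurableSet_le measurable_const measurable_nnnorm)
    exact ⟨C, fun k => (((hXlaw (νs k)).comp hmeas).eLpNorm_eq p).trans_le (hC _ (hνs k))⟩
  refine ⟨fun k => (hXmem (hνs k)).toLp, (hXmem hν).toLp, ?_, fun k => ?_, ?_⟩
  · exact (Lp.tendsto_Lp_iff_tendsto_eLpNorm'' _ (fun k => hXmem (hνs k)) _ (hXmem hν)).2
      (tendsto_Lp_finite_of_tendsto_ae hp.out hp' (fun k => (hX _).aestronglyMeasurable)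
        (hXmem hν) hUI hae)
  · rw [Measure.map_congr (hXmem (hνs k)).coeFn_toLp, hXmap]
  · rw [Measure.map_congr (hXmem hν).coeFn_toLp, hXmap]

section Pushforward

variable {E G : Type*} [TopologicalSpace E] [SecondCountableTopology E]
  [TopologicalSpace.PseudoMetrizableSpace E]

theorem continuous_map_curry {H : Type*} [TopologicalSpace G] [SecondCountableTopology G]
    [TopologicalSpace.PseudoMetrizableSpace G] [MeasurableSpace G] [BorelSpace G]
    [TopologicalSpace H] [MeasurableSpace H] [BorelSpace H]
    {F : E × G → H} (hF : Continuous F) :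
    Continuous fun w : E × ProbabilityMeasure G =>
      w.2.map (hF.comp (Continuous.prodMk_right w.1)).measurable.aemeasurable := by
  borelize E
  have hprod : Continuous fun w : E × ProbabilityMeasure G => (diracProba w.1).prod w.2 :=
    ProbabilityMeasure.continuous_prod.comp (continuous_diracProba.prodMap continuous_id)
  convert (ProbabilityMeasure.continuous_map hF).comp hprod using 2 with w
  refine Subtype.ext ?_
  change Measure.map (F ∘ Prod.mk w.1) (w.2 : Measure G)
    = Measure.map F ((Measure.dirac w.1).prod (w.2 : Measure G))
  rw [Measure.dirac_prod, Measure.map_map hF.measurable measurable_prodMk_left]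

end Pushforward

section Berge

variable {Θ E α : Type*} [TopologicalSpace Θ] [TopologicalSpace E] [LinearOrder α]
  [TopologicalSpace α] {g : Θ → E → α} {L : Set E}

theorem argminOn_nonempty [ClosedIicTopology α] (hL : IsCompact L) (hL' : L.Nonempty) {f : E → α}
    (hf : ContinuousOn f L) : (argminOn f L).Nonempty :=
  hL.exists_isMinOn hL' hf

theorem upperHemicontinuous_argminOn [OrderClosedTopology α] (hL : IsCompact L)
    (hg : Continuous ↿g) : UpperHemicontinuous fun θ => argminOn (g θ) L := by
  refine upperHemicontinuous_iff_forall_isOpen.2 fun θ O hO hsub => ?_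
  rcases L.eq_empty_or_nonempty with rfl | hL'
  · exact .of_forall fun _ _ hx => hx.1.elim
  obtain ⟨x₀, hx₀, hmin⟩ := argminOn_nonempty hL hL' (hg.uncurry_left θ).continuousOn
  have hbetter : ∀ᶠ θ' in 𝓝 θ, ∀ x ∈ L \ O, g θ' x₀ < g θ' x := by
    refine (hL.diff hO).eventually_forall_of_forall_eventually fun x hx => ?_
    have hlt : g θ x₀ < g θ x := not_le.1 fun hle =>
      hx.2 (hsub ⟨hx.1, fun x' hx' => hle.trans (hmin x' hx')⟩)
    exact (isOpen_lt (hg.comp (continuous_fst.prodMk continuous_const)) hg).mem_nhds hlt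
  filter_upwards [hbetter] with θ' hθ' x hx
  exact by_contra fun hxO => (hθ' x ⟨hx.1, hxO⟩).not_ge (hx.2 x₀ hx₀)

end Berge

theorem IsPolyhedron.isClosed {n : ℕ} {X : Set (Fin n → ℝ)} (hX : IsPolyhedron X) : IsClosed X := by
  obtain ⟨k, B, b, rfl⟩ := hX
  exact isClosed_le (continuous_const.matrix_mulVec continuous_id) continuous_const

section Stability

theorem exists_linear_growth_of_lipschitzWith {E G H : Type*} [PseudoMetricSpace E]
    [NormedAddCommGroup G] [NormedAddCommGroup H] {f : E → G → H} {K : ℝ≥0}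
    (hf : LipschitzWith K ↿f) {C : Set E} (hC : IsCompact C) :
    ∃ B : ℝ≥0, ∀ x ∈ C, ∀ z, ‖f x z‖₊ ≤ B * (1 + ‖z‖₊) := by
  have hf₀ : Continuous fun x => ‖f x 0‖₊ :=
    (hf.continuous.comp (continuous_id.prodMk continuous_const)).nnnorm
  obtain ⟨b, hb⟩ := (hC.image hf₀).bddAbove
  refine ⟨b + K, fun x hx z => ?_⟩
  have hfx : LipschitzWith K (f x) := mul_one K ▸ hf.comp (LipschitzWith.prodMk_left x)
  have hz : ‖f x z - f x 0‖₊ ≤ K * ‖z‖₊ := by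
    simpa only [nndist_eq_nnnorm, sub_zero] using hfx.nndist_le z 0
  calc ‖f x z‖₊ = ‖f x 0 + (f x z - f x 0)‖₊ := by rw [add_sub_cancel]
    _ ≤ ‖f x 0‖₊ + ‖f x z - f x 0‖₊ := nnnorm_add_le _ _
    _ ≤ b + K * ‖z‖₊ := add_le_add (hb (mem_image_of_mem _ hx)) hz
    _ ≤ (b + K) * (1 + ‖z‖₊) := by
      rw [add_mul, mul_add, mul_add, mul_one, mul_one]
      exact add_le_add le_self_add le_add_self

variable {E : Type*} [TopologicalSpace E] [SecondCountableTopology E]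
  [TopologicalSpace.PseudoMetrizableSpace E] {s : ℕ} {f : E → (Fin s → ℝ) → ℝ}
  {Ω : Type*} [MeasurableSpace Ω] {P : Measure Ω} [IsProbabilityMeasure P]
  {p : ℝ≥0∞} [hp : Fact (1 ≤ p)] {M : Set (ProbabilityMeasure (Fin s → ℝ))}

theorem AtomlessSpace.exists_tendsto_Lp_map_eq (hP : AtomlessSpace P) (hp' : p ≠ ⊤)
    (hf : Continuous ↿f)
    (hgrowth : ∀ C, IsCompact C → ∃ B : ℝ≥0, ∀ x ∈ C, ∀ z, ‖f x z‖₊ ≤ B * (1 + ‖z‖₊))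
    (hM : LocUnifIntegrating p.toReal M) {ws : ℕ → M × E} {w : M × E}
    (hw : Tendsto ws atTop (𝓝 w)) :
    ∃ (Ys : ℕ → Lp ℝ p P) (Y : Lp ℝ p P), Tendsto Ys atTop (𝓝 Y) ∧
      (∀ k, P.map (Ys k) = Measure.map (f (ws k).2) ((ws k).1 : ProbabilityMeasure (Fin s → ℝ))) ∧
      P.map Y = Measure.map (f w.2) (w.1 : ProbabilityMeasure (Fin s → ℝ)) := by
  have hx : Tendsto (fun k => (ws k).2) atTop (𝓝 w.2) := hw.snd_nhds
  have hμ : Tendsto (fun k => ((ws k).1 : ProbabilityMeasure (Fin s → ℝ))) atTop (𝓝 w.1) :=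
    (continuous_subtype_val.tendsto _).comp hw.fst_nhds
  have hf₂ (x : E) : Continuous (f x) := hf.uncurry_left x
  obtain ⟨B, hB⟩ := hgrowth _ hx.isCompact_insert_range
  have hS := hM.unifIntegrating_of_isCompact (zero_lt_one.trans_le hp.out).ne' hp'
    hμ.isCompact_insert_range
    (insert_subset w.1.2 (range_subset_iff.2 fun k => (ws k).1.2))
  refine hP.exists_tendsto_Lp hp' (hS.map_of_linear_growth B)
    (νs := fun k => (ws k).1.1.map (hf₂ (ws k).2).measurable.aemeasurable)
    (ν := w.1.1.map (hf₂ w.2).measurable.aemeasurable) (fun k => ?_) ?_ ?_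
  · exact ⟨_, .inr ⟨k, rfl⟩, _, (hf₂ _).measurable, hB _ (.inr ⟨k, rfl⟩), rfl⟩
  · exact ⟨_, .inl rfl, _, (hf₂ _).measurable, hB _ (.inl rfl), rfl⟩
  · exact ((continuous_map_curry hf).tendsto (w.2, w.1.1)).comp (hx.prodMk_nhds hμ)

theorem continuous_of_law_representation (hP : AtomlessSpace P) (hp' : p ≠ ⊤) (hf : Continuous ↿f)
    (hgrowth : ∀ C, IsCompact C → ∃ B : ℝ≥0, ∀ x ∈ C, ∀ z, ‖f x z‖₊ ≤ B * (1 + ‖z‖₊))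
    (hM : LocUnifIntegrating p.toReal M) {R : Lp ℝ p P → ℝ} (hR : Continuous R)
    {Q : E → ProbabilityMeasure (Fin s → ℝ) → ℝ}
    (hQ : ∀ x μ, μ ∈ M → ∀ Y : Lp ℝ p P,
      P.map Y = Measure.map (f x) (μ : Measure (Fin s → ℝ)) → Q x μ = R Y) :
    Continuous fun w : M × E => Q w.2 w.1 := by
  refine continuous_iff_seqContinuous.2 fun ws w hw => ?_
  obtain ⟨Ys, Y, hY, hYs_law, hY_law⟩ := hP.exists_tendsto_Lp_map_eq hp' hf hgrowth hM hw
  have hQs (k : ℕ) : Q (ws k).2 (ws k).1 = R (Ys k) := hQ _ _ (ws k).1.2 _ (hYs_law k)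
  simpa only [Function.comp_def, hQs, hQ _ _ w.1.2 _ hY_law] using (hR.tendsto Y).comp hY

theorem CLM_stability_general (hP : AtomlessSpace P) (hp' : p ≠ ⊤) (hf : Continuous ↿f)
    (hgrowth : ∀ C, IsCompact C → ∃ B : ℝ≥0, ∀ x ∈ C, ∀ z, ‖f x z‖₊ ≤ B * (1 + ‖z‖₊))
    {R : Lp ℝ p P → ℝ} (hconv : ConvexOn ℝ univ R)
    (hmono : ∀ Y₁ Y₂ : Lp ℝ p P, (Y₁ : Ω → ℝ) ≤ᵐ[P] (Y₂ : Ω → ℝ) → R Y₁ ≤ R Y₂)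
    {L : Set E} (hL : IsCompact L) (hM : LocUnifIntegrating p.toReal M)
    {Q : E → ProbabilityMeasure (Fin s → ℝ) → ℝ}
    (hQ : ∀ x μ, μ ∈ M → ∀ Y : Lp ℝ p P,
      P.map Y = Measure.map (f x) (μ : Measure (Fin s → ℝ)) → Q x μ = R Y)
    {V : Set E} (hV : IsOpen V)
    {φ : ProbabilityMeasure (Fin s → ℝ) → ℝ} (hφ : ∀ μ, φ μ = sInf ((fun x => Q x μ) '' L))
    {Φ : ProbabilityMeasure (Fin s → ℝ) → Set E} (hΦ : ∀ μ, Φ μ = argminOn (fun x => Q x μ) L)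
    {μ₀ : ProbabilityMeasure (Fin s → ℝ)} (hμ₀ : μ₀ ∈ M)
    (hCLM : (Φ μ₀).Nonempty ∧ Φ μ₀ ⊆ V) :
    ContinuousWithinAt φ M μ₀ ∧
    (∀ O : Set E, IsOpen O → Φ μ₀ ⊆ O →
      ∃ N : Set (ProbabilityMeasure (Fin s → ℝ)), IsOpen N ∧ μ₀ ∈ N ∧
        ∀ μ ∈ N, μ ∈ M → Φ μ ⊆ O) ∧
    (∃ U : Set (ProbabilityMeasure (Fin s → ℝ)), IsOpen U ∧ μ₀ ∈ U ∧
      ∀ μ ∈ U, μ ∈ M → (Φ μ).Nonempty ∧ Φ μ ⊆ V) := by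
  obtain rfl : φ = _ := funext hφ
  obtain rfl : Φ = _ := funext hΦ
  have hR : Continuous R := continuous_of_convexOn_of_monotone hconv fun Y₁ Y₂ h =>
    hmono Y₁ Y₂ ((Lp.coeFn_le Y₁ Y₂).2 h)
  have hQcont := continuous_of_law_representation hP hp' hf hgrowth hM hR hQ
  have berge : ∀ O : Set E, IsOpen O → argminOn (fun x => Q x μ₀) L ⊆ O →
      ∃ N : Set (ProbabilityMeasure (Fin s → ℝ)), IsOpen N ∧ μ₀ ∈ N ∧
        ∀ μ ∈ N, μ ∈ M → argminOn (fun x => Q x μ) L ⊆ O := fun O hO hsub => by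
    have hev := upperHemicontinuous_iff_forall_isOpen.1
      (upperHemicontinuous_argminOn (g := fun (μ : M) x => Q x μ) hL hQcont) ⟨μ₀, hμ₀⟩ O hO hsub
    obtain ⟨N, hN, hμN, hNM⟩ := mem_nhdsWithin.1
      ((eventually_nhds_subtype_iff M ⟨μ₀, hμ₀⟩ fun μ => argminOn (fun x => Q x μ) L ⊆ O).1 hev)
    exact ⟨N, hN, hμN, fun μ hμ hμM => hNM ⟨hμ, hμM⟩⟩
  refine ⟨?_, berge, ?_⟩
  · exact (continuousWithinAt_iff_continuousAt_domRestrict _ hμ₀).2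
      (hL.continuous_sInf (f := fun (μ : M) x => Q x μ) hQcont).continuousAt
  · obtain ⟨U, hU, hμU, hUM⟩ := berge V hV hCLM.2
    refine ⟨U, hU, hμU, fun μ hμ hμM => ⟨argminOn_nonempty hL ?_ ?_, hUM μ hμ hμM⟩⟩
    · exact hCLM.1.mono fun x hx => hx.1
    · exact (hQcont.comp (Continuous.prodMk_right (⟨μ, hμM⟩ : M))).continuousOn

end Stability

theorem CLM_stability {n m s : ℕ}
    (c : Fin n → ℝ) (q d : Fin m → ℝ)
    (A : Matrix (Fin s) (Fin m) ℝ) (T : Matrix (Fin s) (Fin n) ℝ)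
    (hdom : (domf c q d A T).Nonempty) (hP : Pfeas A T = Set.univ)
    {Ω : Type*} [MeasureSpace Ω] [IsProbabilityMeasure (volume : Measure Ω)]
    (hatomless : AtomlessSpace (volume : Measure Ω))
    (p : ℝ≥0∞) [hp1 : Fact (1 ≤ p)] (hptop : p ≠ ⊤)
    (R : Lp ℝ p (volume : Measure Ω) → ℝ)
    (hLI : ∀ Y₁ Y₂ : Lp ℝ p (volume : Measure Ω),
      Measure.map (Y₁ : Ω → ℝ) volume = Measure.map (Y₂ : Ω → ℝ) volume → R Y₁ = R Y₂)
    (hconv : ConvexOn ℝ Set.univ R)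
    (hmono : ∀ Y₁ Y₂ : Lp ℝ p (volume : Measure Ω),
      (Y₁ : Ω → ℝ) ≤ᵐ[volume] (Y₂ : Ω → ℝ) → R Y₁ ≤ R Y₂)
    (X : Set (Fin n → ℝ)) (hXpoly : IsPolyhedron X) (hXne : X.Nonempty)
    (M : Set (ProbabilityMeasure (Fin s → ℝ)))
    (hMmom : ∀ μ ∈ M,
      ∫⁻ z, ENNReal.ofReal (‖z‖ ^ p.toReal) ∂(μ : Measure (Fin s → ℝ)) < ⊤)
    (hLUI : LocUnifIntegrating p.toReal M)
    (Q : (Fin n → ℝ) → ProbabilityMeasure (Fin s → ℝ) → ℝ)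
    (hQ : ∀ x μ, μ ∈ M → ∀ Y : Lp ℝ p (volume : Measure Ω),
      Measure.map (Y : Ω → ℝ) volume
        = Measure.map (fun z => (fE c q d A T x z).toReal) (μ : Measure (Fin s → ℝ)) →
      Q x μ = R Y)
    (V : Set (Fin n → ℝ)) (hVopen : IsOpen V) (hVbdd : Bornology.IsBounded V)
    (hVne : V ≠ Set.univ)
    (φV : ProbabilityMeasure (Fin s → ℝ) → ℝ)
    (hφV : ∀ μ, φV μ = sInf ((fun x => Q x μ) '' (X ∩ closure V)))
    (ΦV : ProbabilityMeasure (Fin s → ℝ) → Set (Fin n → ℝ))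
    (hΦV : ∀ μ, ΦV μ =
      {x ∈ X ∩ closure V | ∀ x' ∈ X ∩ closure V, Q x μ ≤ Q x' μ})
    (μ₀ : ProbabilityMeasure (Fin s → ℝ)) (hμ₀ : μ₀ ∈ M)
    (hCLM : (ΦV μ₀).Nonempty ∧ ΦV μ₀ ⊆ V) :
    -- (c) the localized optimal value function is weakly continuous at `μ₀` relative to `M`
    ContinuousWithinAt φV M μ₀ ∧
    -- (d) Berge upper semicontinuity of the localized solution set mapping at `μ₀`
    (∀ O : Set (Fin n → ℝ), IsOpen O → ΦV μ₀ ⊆ O →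
      ∃ N : Set (ProbabilityMeasure (Fin s → ℝ)), IsOpen N ∧ μ₀ ∈ N ∧
        ∀ μ ∈ N, μ ∈ M → ΦV μ ⊆ O) ∧
    -- (e) CLM property persists on a weakly open neighbourhood of `μ₀`
    (∃ U : Set (ProbabilityMeasure (Fin s → ℝ)), IsOpen U ∧ μ₀ ∈ U ∧
      ∀ μ ∈ U, μ ∈ M → (ΦV μ).Nonempty ∧ ΦV μ ⊆ V) := by
  obtain ⟨K, hK⟩ := exists_lipschitzWith_toReal_fE (c := c) (q := q) hdom hP
  exact CLM_stability_general hatomless hptop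
    (f := fun x z => (fE c q d A T x z).toReal) hK.continuous
    (fun _ hC => exists_linear_growth_of_lipschitzWith hK hC) hconv hmono
    (hVbdd.isCompact_closure.inter_left hXpoly.isClosed) hLUI hQ hVopen hφV hΦV hμ₀ hCLM
end
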